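/- Let B be the integer 5×5 matrix with rows (1,0,−1,−1,−1), (0,0,0,1,0), (−1,1,0,0,1), (0,1,0,−1,0), (0,0,1,1,1), and let C be the 5×5 matrix whose only nonzero entry is −1 in position (5,1). For n ≥ 1 let A_n be the 5n×5n block upper bidiagonal matrix with n diagonal blocks equal to B and superdiagonal blocks equal to C (all other blocks zero). Then the polynomial Δ_n(t) = det(A_n − t·A_nᵀ) ∈ ℤ[t] satisfies Δ_n(0) = 1 and has degree exactly 5n, with the coefficient of t^{5n} equal to (−1)^n. -/

import Mathlib

/-- The 5×5 block `B` of the Seifert matrix. -/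
def Bmat : Matrix (Fin 5) (Fin 5) ℤ :=
  !![1, 0, -1, -1, -1;
     0, 0, 0, 1, 0;
     -1, 1, 0, 0, 1;
     0, 1, 0, -1, 0;
     0, 0, 1, 1, 1]

/-- The 5×5 block `C`, whose only nonzero entry is `-1` in position `(5,1)`. -/
def Cmat : Matrix (Fin 5) (Fin 5) ℤ :=
  !![0, 0, 0, 0, 0;
     0, 0, 0, 0, 0;
     0, 0, 0, 0, 0;
     0, 0, 0, 0, 0;
     -1, 0, 0, 0, 0]

/-- The `5n × 5n` block upper bidiagonal matrix with diagonal blocks `B` and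
superdiagonal blocks `C`. -/
def Amat (n : ℕ) : Matrix (Fin (5 * n)) (Fin (5 * n)) ℤ := fun i j =>
  if (i : ℕ) / 5 = (j : ℕ) / 5 then
    Bmat ⟨(i : ℕ) % 5, by omega⟩ ⟨(j : ℕ) % 5, by omega⟩
  else if (i : ℕ) / 5 + 1 = (j : ℕ) / 5 then
    Cmat ⟨(i : ℕ) % 5, by omega⟩ ⟨(j : ℕ) % 5, by omega⟩
  else 0

/-- The Alexander polynomial `Δ_n(t) = det(A_n - t A_nᵀ) ∈ ℤ[t]`. -/
noncomputable def DeltaPoly (n : ℕ) : Polynomial ℤ :=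
  Matrix.det ((Amat n).map Polynomial.C - (Polynomial.X : Polynomial ℤ) • ((Amat n).transpose.map Polynomial.C))

/-!
Each factor of a summand in the Leibniz expansion of `det (M - t N)` is of degree at most one in
`t`, so for `d × d` matrices the constant term is `det M`, the coefficient of `t ^ d` is
`(-1) ^ d * det N`, and the degree is at most `d`. With `M = A_n`, `N = A_nᵀ` and `d = 5 n`
everything reduces to `det A_n = 1`. As a matrix of `5 × 5` blocks, `A_n` is upper triangular, so
its determinant is the product of the determinants of its diagonal blocks, each of which is `1`.
-/

section Pencil

open Polynomial Matrix

variable {ι R : Type*} [CommRing R]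

theorem map_C_sub_X_smul_map_C (A B : Matrix ι ι R) :
    A.map C - (X : R[X]) • B.map C = (X : R[X]) • (-B).map C + A.map C := by
  ext1 i j
  simp [sub_eq_neg_add]

variable [Fintype ι] [DecidableEq ι]

theorem eval_zero_det_sub_X_smul (A B : Matrix ι ι R) :
    (det (A.map C - (X : R[X]) • B.map C)).eval 0 = A.det := by
  rw [map_C_sub_X_smul_map_C, ← coeff_zero_eq_eval_zero, coeff_det_X_add_C_zero]

theorem coeff_card_det_sub_X_smul (A B : Matrix ι ι R) :
    (det (A.map C - (X : R[X]) • B.map C)).coeff (Fintype.card ι) =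
      (-1) ^ Fintype.card ι * B.det := by
  rw [map_C_sub_X_smul_map_C, coeff_det_X_add_C_card, det_neg]

theorem natDegree_det_sub_X_smul_le (A B : Matrix ι ι R) :
    (det (A.map C - (X : R[X]) • B.map C)).natDegree ≤ Fintype.card ι := by
  rw [map_C_sub_X_smul_map_C]
  exact natDegree_det_X_add_C_le (-B) A

theorem natDegree_det_sub_X_smul_eq_card (A : Matrix ι ι R) {B : Matrix ι ι R} (hB : B.det ≠ 0) :
    (det (A.map C - (X : R[X]) • B.map C)).natDegree = Fintype.card ι := by
  refine natDegree_eq_of_le_of_coeff_ne_zero (natDegree_det_sub_X_smul_le A B) ?_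
  rwa [coeff_card_det_sub_X_smul, Ne, (isUnit_one.neg.pow _).mul_right_eq_zero]

end Pencil

section BlockTriangular

open Matrix

variable {ι m R : Type*} [Fintype ι] [Fintype m] [DecidableEq m] [CommRing R]

theorem det_toSquareBlock_fst_comp [DecidableEq ι] (M : Matrix ι ι (Matrix m m R)) (k : ι) :
    ((M.comp ι ι m m R).toSquareBlock Prod.fst k).det = (M k k).det := by
  let e : {p : ι × m // p.1 = k} ≃ m :=
    Equiv.prodSubtypeFstEquivSubtypeProd.trans (Equiv.uniqueProd m {i // i = k})
  rw [← det_submatrix_equiv_self e (M k k)]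
  congr 1
  ext ⟨p, hp⟩ ⟨q, hq⟩
  change M p.1 q.1 p.2 q.2 = M k k p.2 q.2
  rw [hp, hq]

theorem det_comp_of_isUpperTriangular [LinearOrder ι] {M : Matrix ι ι (Matrix m m R)}
    (hM : M.IsUpperTriangular) :
    (M.comp ι ι m m R).det = ∏ k, (M k k).det :=
  (BlockTriangular.det_fintype hM.comp).trans <|
    Finset.prod_congr rfl fun k _ ↦ det_toSquareBlock_fst_comp M k

end BlockTriangular

section Bidiagonal

open Matrix

variable {α : Type*} [Zero α]

/-- The `n × n` upper bidiagonal Toeplitz matrix with diagonal entries `b` and superdiagonal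
entries `c`. The entries may themselves be matrices, in which case `Matrix.comp` turns it into the
corresponding block matrix. -/
def upperBidiagonal (n : ℕ) (b c : α) : Matrix (Fin n) (Fin n) α :=
  of fun i j ↦ if i = j then b else if (i : ℕ) + 1 = j then c else 0

theorem upperBidiagonal_apply_self {n : ℕ} (b c : α) (i : Fin n) :
    upperBidiagonal n b c i i = b :=
  if_pos rfl

theorem isUpperTriangular_upperBidiagonal (n : ℕ) (b c : α) :
    (upperBidiagonal n b c).IsUpperTriangular := by
  intro i j (hij : j < i)
  rw [upperBidiagonal, of_apply, if_neg hij.ne', if_neg (by lia)]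

theorem det_comp_upperBidiagonal {m R : Type*} [Fintype m] [DecidableEq m] [CommRing R] (n : ℕ)
    (B C : Matrix m m R) :
    ((upperBidiagonal n B C).comp (Fin n) (Fin n) m m R).det = B.det ^ n := by
  simp [det_comp_of_isUpperTriangular (isUpperTriangular_upperBidiagonal n B C),
    upperBidiagonal_apply_self]

end Bidiagonal

/-- The splitting of the row index `5 * k + r` of `Amat n` into its block index `k` and its position
`r` inside the block. -/
def blockIndexEquiv (n : ℕ) : Fin n × Fin 5 ≃ Fin (5 * n) :=
  finProdFinEquiv.trans (finCongr (Nat.mul_comm n 5))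

theorem coe_fst_blockIndexEquiv_symm {n : ℕ} (i : Fin (5 * n)) :
    (((blockIndexEquiv n).symm i).1 : ℕ) = i / 5 :=
  rfl

theorem Amat_eq_reindex (n : ℕ) :
    Amat n = Matrix.reindex (blockIndexEquiv n) (blockIndexEquiv n)
      ((upperBidiagonal n Bmat Cmat).comp (Fin n) (Fin n) (Fin 5) (Fin 5) ℤ) := by
  ext i j
  simp only [Amat, upperBidiagonal, Matrix.reindex_apply, Matrix.submatrix_apply,
    Matrix.comp_apply, Matrix.of_apply, Fin.ext_iff, coe_fst_blockIndexEquiv_symm]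
  split_ifs <;> simp only [*, ↓reduceIte] <;> rfl

theorem det_Bmat : Bmat.det = 1 := by
  simp [Bmat, Matrix.det_succ_row_zero, Fin.sum_univ_succ, Fin.succAbove]

theorem det_Amat (n : ℕ) : (Amat n).det = 1 := by
  rw [Amat_eq_reindex, Matrix.det_reindex_self, det_comp_upperBidiagonal, det_Bmat, one_pow]

/-- `Δ_n(0) = 1`, and `Δ_n` has degree exactly `5n` with leading
coefficient `(-1)^n`. -/
theorem statement_19 (n : ℕ) (hn : 1 ≤ n) :
    (DeltaPoly n).eval 0 = 1 ∧ (DeltaPoly n).natDegree = 5 * n ∧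
      (DeltaPoly n).coeff (5 * n) = (-1) ^ n := by
  have hdet : (Amat n).transpose.det = 1 := by rw [Matrix.det_transpose, det_Amat]
  refine ⟨?_, ?_, ?_⟩
  · rw [DeltaPoly, eval_zero_det_sub_X_smul, det_Amat]
  · rw [DeltaPoly, natDegree_det_sub_X_smul_eq_card _ (hdet ▸ one_ne_zero), Fintype.card_fin]
  · have hcoeff := coeff_card_det_sub_X_smul (Amat n) (Amat n).transpose
    rw [hdet, mul_one, Fintype.card_fin] at hcoeff
    rw [DeltaPoly, hcoeff, pow_mul, Odd.neg_one_pow (by decide)]
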